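/- There exist left-c.e. reals α and β such that α is not total-Solovay reducible to α + β; in particular, addition is not an upper bound operator for total Solovay reducibility on the left-c.e. reals. -/

import Mathlib

/-- A real is left-c.e. if some computable nondecreasing sequence of rationals converges to it. -/
def LeftCE (α : ℝ) : Prop :=
  ∃ a : ℕ → ℚ, Computable a ∧ Monotone a ∧
    Filter.Tendsto (fun n => (a n : ℝ)) Filter.atTop (nhds α)

/-- Total Solovay reducibility: `α ≤_S^tot β`. -/
def TotalSolovayReducible (α β : ℝ) : Prop :=
  ∃ c : ℚ, 0 < c ∧ ∃ f : ℚ → ℚ, Computable f ∧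
    ∀ q : ℚ, (q : ℝ) < β → (f q : ℝ) < α ∧ α - (f q : ℝ) < (c : ℝ) * (β - (q : ℝ))

/-! The pair `(α, β)` is the limit of the lower corners of nested squares. Level `e`, whose square
has lower corner `x` and side `T`, is devoted to one program `f` and one constant. As soon as `f`
answers on `q = x.1 + x.2 + T / 2`, the corner moves: if `f q < x.1 + T / 4`, then by `T / 2` in the
first coordinate and by a tiny amount in the second, so that `α + β - q` is tiny compared with
`α - f q`; otherwise by `T / 2` in the second coordinate and by a tiny amount in the first, so that
`q < α + β` although `α < f q`. Each level moves at most once from a given corner, so every level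
settles. A late move of a level discards the moves of all deeper levels, but as it exceeds the side
of the next square, the coordinates still only increase over time. -/

open Encodable Filter Topology
open Nat.Partrec (Code)

section ComputabilityToolkit

variable {α β : Type*} [Primcodable α] [Primcodable β]

theorem computablePred_comp {p : β → Prop} {f : α → β} (hp : ComputablePred p)
    (hf : Computable f) : ComputablePred fun a => p (f a) := by
  obtain ⟨_, hp⟩ := hp
  exact (hp.comp hf).computablePred

theorem computable_ite {p : α → Prop} [DecidablePred p] {f g : α → β} (hp : ComputablePred p)
    (hf : Computable f) (hg : Computable g) : Computable fun a => if p a then f a else g a :=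
  (Computable.cond hp.decide hf hg).of_eq fun a => Bool.cond_decide (p a) (f a) (g a)

theorem computable_of_computablePred_graph {g : α → β}
    (hg : ComputablePred fun p : α × β => g p.1 = p.2) : Computable g := by
  classical
  let search (a : α) (n : ℕ) : Option β :=
    (decode n).bind fun b => if g a = b then some b else none
  have hsearch : Computable₂ search :=
    .option_bind (Computable.decode.comp .snd) <|
      computable_ite (computablePred_comp hg (.pair (.comp .fst .fst) .snd))
        (Computable.option_some.comp .snd) (.const none)
  refine (Partrec.rfindOpt (f := search) hsearch).of_eq_tot fun a => ?_
  obtain ⟨b, hb⟩ := Part.dom_iff_mem.1 <|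
    Nat.rfindOpt_dom (f := search a).2 ⟨encode (g a), g a, by simp [search]⟩
  obtain ⟨n, hn⟩ := Nat.rfindOpt_spec hb
  obtain rfl : g a = b := by
    simp only [search, Option.mem_def, Option.bind_eq_some_iff] at hn
    grind
  exact hb

end ComputabilityToolkit

section NaturalNumbers

theorem primrec_nat_count {p : ℕ → Prop} [DecidablePred p] (hp : PrimrecPred p) :
    Primrec (Nat.count p) :=
  (Primrec.list_length.comp ((Primrec.listFilter hp).comp Primrec.list_range)).of_eq fun _ =>
    List.countP_eq_length_filter.symm

theorem primrecRel_nat_dvd : PrimrecRel ((· ∣ ·) : ℕ → ℕ → Prop) :=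
  (Primrec.eq.comp (Primrec.nat_mod.comp .snd .fst) (.const 0)).of_eq fun _ =>
    Nat.dvd_iff_mod_eq_zero.symm

theorem coprime_iff_forall_mem_range {m n : ℕ} :
    m.Coprime n ↔ ∀ k ∈ List.range (m + n + 1), k ∣ m → k ∣ n → k = 1 := by
  refine ⟨fun h k _ hm hn => Nat.eq_one_of_dvd_coprimes h hm hn, fun h => ?_⟩
  have hle : m.gcd n ≤ m + n := by
    obtain rfl | hm := m.eq_zero_or_pos
    · simp
    · exact (Nat.gcd_le_left n hm).trans (m.le_add_right n)
  exact h _ (List.mem_range.2 (by omega)) (m.gcd_dvd_left n) (m.gcd_dvd_right n)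

theorem primrecRel_nat_coprime : PrimrecRel Nat.Coprime := by
  have hdvd : PrimrecRel fun (k : ℕ) (p : ℕ × ℕ) => k ∣ p.1 → k ∣ p.2 → k = 1 :=
    ((primrecRel_nat_dvd.comp .fst (.comp .fst .snd)).not.or <|
      (primrecRel_nat_dvd.comp .fst (.comp .snd .snd)).not.or <|
        Primrec.eq.comp .fst (.const 1)).of_eq fun _ => by tauto
  exact (hdvd.forall_mem_list.comp (Primrec.list_range.comp <|
    Primrec.succ.comp (Primrec.nat_add.comp .fst .snd)) .id).of_eq fun _ =>
      coprime_iff_forall_mem_range.symm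

end NaturalNumbers

section IntegerArithmetic

theorem encode_int_natCast (n : ℕ) : encode (n : ℤ) = 2 * n := rfl

theorem encode_int_negSucc (n : ℕ) : encode (Int.negSucc n) = 2 * n + 1 := rfl

theorem primrecPred_even_encode_int : PrimrecPred fun z : ℤ => encode z % 2 = 0 :=
  Primrec.eq.comp (Primrec.nat_mod.comp .encode (.const 2)) (.const 0)

theorem primrec_int_toNat : Primrec Int.toNat := by
  refine (Primrec.ite primrecPred_even_encode_int
    (Primrec.nat_div.comp .encode (.const 2)) (.const 0)).of_eq fun z => ?_
  cases z with
  | ofNat n => simp [encode_int_natCast]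
  | negSucc n => simp [encode_int_negSucc, Nat.add_mod]

theorem primrec_int_neg : Primrec (Neg.neg : ℤ → ℤ) := by
  refine Primrec.encode_iff.1 <| (Primrec.ite primrecPred_even_encode_int
    (Primrec.pred.comp .encode) (Primrec.succ.comp .encode)).of_eq fun z => ?_
  rcases z with (_ | n) | n
  · rfl
  · rw [show -Int.ofNat (n + 1) = Int.negSucc n from rfl, Int.ofNat_eq_natCast,
      encode_int_natCast, encode_int_negSucc, if_pos (by omega)]
    rfl
  · rw [Int.neg_negSucc, encode_int_natCast, encode_int_negSucc, if_neg (by omega)]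
    rfl

theorem primrec_int_natCast : Primrec (Nat.cast : ℕ → ℤ) :=
  Primrec.encode_iff.1 Primrec.nat_double

theorem primrec_int_subNatNat : Primrec₂ Int.subNatNat := by
  refine (Primrec.ite (Primrec.nat_le.comp .snd .fst)
    (primrec_int_natCast.comp (Primrec.nat_sub.comp .fst .snd))
    (primrec_int_neg.comp <| primrec_int_natCast.comp <|
      Primrec.nat_sub.comp .snd .fst)).of_eq fun p => ?_
  rw [Int.subNatNat_eq_coe]
  split_ifs <;> omega

theorem primrec_int_add : Primrec₂ ((· + ·) : ℤ → ℤ → ℤ) := by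
  have hneg : Primrec fun z : ℤ => (-z).toNat := primrec_int_toNat.comp primrec_int_neg
  have hpos := primrec_int_toNat
  refine (primrec_int_subNatNat.comp
    (Primrec.nat_add.comp (hpos.comp .fst) (hpos.comp .snd))
    (Primrec.nat_add.comp (hneg.comp .fst) (hneg.comp .snd))).of_eq fun p => ?_
  rw [Int.subNatNat_eq_coe]
  dsimp only
  omega

theorem primrec_int_mul : Primrec₂ ((· * ·) : ℤ → ℤ → ℤ) := by
  have hneg : Primrec fun z : ℤ => (-z).toNat := primrec_int_toNat.comp primrec_int_neg
  have hpos := primrec_int_toNat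
  refine (primrec_int_subNatNat.comp
    (Primrec.nat_add.comp (Primrec.nat_mul.comp (hpos.comp .fst) (hpos.comp .snd))
      (Primrec.nat_mul.comp (hneg.comp .fst) (hneg.comp .snd)))
    (Primrec.nat_add.comp (Primrec.nat_mul.comp (hpos.comp .fst) (hneg.comp .snd))
      (Primrec.nat_mul.comp (hneg.comp .fst) (hpos.comp .snd)))).of_eq fun p => ?_
  conv_rhs => rw [← p.1.toNat_sub_toNat_neg, ← p.2.toNat_sub_toNat_neg]
  rw [Int.subNatNat_eq_coe]
  push_cast
  ring

theorem primrec_int_natAbs : Primrec Int.natAbs :=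
  (Primrec.nat_add.comp primrec_int_toNat (primrec_int_toNat.comp primrec_int_neg)).of_eq
    Int.toNat_add_toNat_neg_eq_natAbs

theorem primrecRel_int_lt : PrimrecRel ((· < ·) : ℤ → ℤ → Prop) :=
  (Primrec.nat_lt.comp (.const 0) (primrec_int_toNat.comp
    (primrec_int_add.comp .snd (primrec_int_neg.comp .fst)))).of_eq fun p => by
      simp only [Int.lt_toNat]
      omega

end IntegerArithmetic

section RationalArithmetic

/-- Pairs `(z, d)` which are the numerator and denominator of a rational in lowest terms. -/
def IsReducedFraction (p : ℤ × ℕ) : Prop := p.2 ≠ 0 ∧ p.1.natAbs.Coprime p.2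

instance : DecidablePred IsReducedFraction := fun _ => inferInstanceAs (Decidable (_ ∧ _))

theorem primrecPred_isReducedFraction : PrimrecPred IsReducedFraction :=
  (Primrec.eq.comp .snd (.const 0)).not.and <|
    primrecRel_nat_coprime.comp (primrec_int_natAbs.comp .fst) .snd

theorem isReducedFraction_iff_exists_rat {p : ℤ × ℕ} :
    IsReducedFraction p ↔ ∃ x : ℚ, (x.num, x.den) = p :=
  ⟨fun h => ⟨⟨p.1, p.2, h.1, h.2⟩, rfl⟩, by rintro ⟨x, rfl⟩; exact ⟨x.den_nz, x.reduced⟩⟩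

theorem encode_rat_instEncodable (x : ℚ) :
    @encode ℚ Rat.instEncodable x = encode (x.num, x.den) := by
  cases x; rfl

theorem mem_range_encode_rat_instEncodable {n : ℕ} :
    n ∈ Set.range (@encode ℚ Rat.instEncodable) ↔
      IsReducedFraction (Denumerable.ofNat (ℤ × ℕ) n) := by
  simp_rw [isReducedFraction_iff_exists_rat, Set.mem_range, encode_rat_instEncodable]
  refine exists_congr fun x => ⟨?_, ?_⟩
  · rintro rfl
    exact (Denumerable.ofNat_encode _).symm
  · intro h
    rw [h, Denumerable.encode_ofNat]

theorem encode_ofEncodableOfInfinite {α : Type*} [Encodable α] [Infinite α]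
    [DecidablePred (· ∈ Set.range (encode (α := α)))] (x : α) :
    @encode α (Denumerable.ofEncodableOfInfinite α).toEncodable x =
      Nat.count (· ∈ Set.range (encode (α := α))) (encode x) := by
  obtain rfl := Subsingleton.elim ‹DecidablePred _› (decidableRangeEncode α)
  rfl

-- `Computable` on `ℚ` refers to `Rat.instDenumerable`, whereas a bare `encode` on `ℚ` would be
-- elaborated with `Rat.instEncodable`; the former numbers the codes of the latter in order.
theorem encode_rat_eq_count (x : ℚ) :
    @encode ℚ (Primcodable.ofDenumerable ℚ).toEncodable x =
      Nat.count (fun n => IsReducedFraction (Denumerable.ofNat (ℤ × ℕ) n))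
        (encode (x.num, x.den)) := by
  classical
  simp_rw [← mem_range_encode_rat_instEncodable, ← encode_rat_instEncodable]
  convert encode_ofEncodableOfInfinite x

theorem computable_rat_num_den : Computable fun x : ℚ => (x.num, x.den) := by
  have hcode : PrimrecPred fun q : ℚ × ℤ × ℕ => IsReducedFraction q.2 ∧
      Nat.count (fun n => IsReducedFraction (Denumerable.ofNat (ℤ × ℕ) n)) (encode q.2) =
        @encode ℚ (Primcodable.ofDenumerable ℚ).toEncodable q.1 :=
    (primrecPred_isReducedFraction.comp .snd).and <|
      Primrec.eq.comp ((primrec_nat_count <| primrecPred_isReducedFraction.comp (.ofNat _)).comp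
        (.comp .encode .snd)) (.comp .encode .fst)
  refine computable_of_computablePred_graph (hcode.computablePred.of_eq ?_)
  rintro ⟨x, p⟩
  constructor
  · rintro ⟨hp, hcount⟩
    obtain ⟨y, rfl⟩ := isReducedFraction_iff_exists_rat.1 hp
    rw [← encode_rat_eq_count] at hcount
    rw [(@encode_inj ℚ (Primcodable.ofDenumerable ℚ).toEncodable y x).1 hcount]
  · intro h
    obtain rfl : (x.num, x.den) = p := h
    exact ⟨isReducedFraction_iff_exists_rat.2 ⟨x, rfl⟩, (encode_rat_eq_count x).symm⟩

theorem computable_rat_num : Computable Rat.num := Computable.fst.comp computable_rat_num_den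

theorem computable_rat_den : Computable Rat.den := Computable.snd.comp computable_rat_num_den

theorem primrec_num_mul_den : Primrec₂ fun p q : ℤ × ℕ => p.1 * (q.2 : ℤ) :=
  primrec_int_mul.comp (.comp .fst .fst) (primrec_int_natCast.comp (.comp .snd .snd))

theorem computable_mkRat : Computable₂ mkRat := by
  have hcross : PrimrecPred fun q : (ℤ × ℕ) × (ℤ × ℕ) =>
      q.1.2 = 0 ∧ q.2.1 = 0 ∨ q.1.2 ≠ 0 ∧ q.1.1 * q.2.2 = q.2.1 * q.1.2 :=
    have hzero := Primrec.eq.comp (Primrec.snd.comp .fst) (.const 0)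
    (hzero.and (Primrec.eq.comp (.comp .fst .snd) (.const 0))).or
      (hzero.not.and
        (Primrec.eq.comp primrec_num_mul_den (primrec_num_mul_den.comp .snd .fst)))
  refine computable_of_computablePred_graph ((computablePred_comp hcross.computablePred
    (.pair .fst (computable_rat_num_den.comp .snd))).of_eq ?_)
  rintro ⟨⟨z, d⟩, x⟩
  obtain rfl | hd := eq_or_ne d 0
  · simp [eq_comm]
  · simp only [hd, false_and, ne_eq, not_false_eq_true, true_and, false_or]
    rw [← Rat.mkRat_eq_iff hd x.den_nz, Rat.mkRat_self]

theorem computable_rat_add : Computable₂ ((· + ·) : ℚ → ℚ → ℚ) := by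
  have hcross : Primrec fun p : (ℤ × ℕ) × ℤ × ℕ => p.1.1 * (p.2.2 : ℤ) + p.2.1 * (p.1.2 : ℤ) :=
    primrec_int_add.comp primrec_num_mul_den (primrec_num_mul_den.comp .snd .fst)
  exact (computable_mkRat.comp
    (hcross.to_comp.comp (.pair (computable_rat_num_den.comp .fst)
      (computable_rat_num_den.comp .snd)))
    (Primrec.nat_mul.to_comp.comp (computable_rat_den.comp .fst)
      (computable_rat_den.comp .snd))).of_eq fun p => (Rat.add_def' p.1 p.2).symm

theorem computable_rat_div_natCast : Computable₂ fun (x : ℚ) (n : ℕ) => x / n :=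
  (computable_mkRat.comp (computable_rat_num.comp .fst)
    (Primrec.nat_mul.to_comp.comp (computable_rat_den.comp .fst) .snd)).of_eq fun p => by
      rw [Rat.mkRat_eq_div, Nat.cast_mul, div_mul_eq_div_div, Rat.num_div_den]

theorem computablePred_rat_lt : ComputablePred fun p : ℚ × ℚ => p.1 < p.2 := by
  have hcross : PrimrecPred fun p : (ℤ × ℕ) × ℤ × ℕ => p.1.1 * (p.2.2 : ℤ) < p.2.1 * (p.1.2 : ℤ) :=
    primrecRel_int_lt.comp primrec_num_mul_den (primrec_num_mul_den.comp .snd .fst)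
  exact (computablePred_comp hcross.computablePred (.pair (computable_rat_num_den.comp .fst)
    (computable_rat_num_den.comp .snd))).of_eq fun p => (Rat.lt_iff p.1 p.2).symm

end RationalArithmetic

section BoundedEvaluation

variable {α β : Type*} [Primcodable α] [Primcodable β]

variable (β) in
/-- The output of the program `c` on input `a`, if it is found within the step bound `s` of
`Code.evaln`. -/
def evalWithin (s : ℕ) (c : Code) (a : α) : Option β :=
  (c.evaln s (encode a)).bind decode

theorem computable_evalWithin {γ : Type*} [Primcodable γ] {s : γ → ℕ} {c : γ → Code} {a : γ → α}
    (hs : Computable s) (hc : Computable c) (ha : Computable a) :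
    Computable fun x => evalWithin β (s x) (c x) (a x) :=
  .option_bind (Code.primrec_evaln.to_comp.comp <|
    .pair (.pair hs hc) (Computable.encode.comp ha)) (Computable.decode.comp .snd)

theorem evalWithin_mono {s t : ℕ} (hst : s ≤ t) {c : Code} {a : α} {b : β}
    (h : evalWithin β s c a = some b) : evalWithin β t c a = some b := by
  obtain ⟨n, hn, hb⟩ := Option.bind_eq_some_iff.1 h
  exact Option.bind_eq_some_iff.2 ⟨n, Code.evaln_mono hst hn, hb⟩

theorem exists_code_evalWithin_eq {f : α → β} (hf : Computable f) :
    ∃ c : Code, ∀ a, ∃ s, evalWithin β s c a = some (f a) := by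
  obtain ⟨c, hc⟩ := Code.exists_code.1 hf
  refine ⟨c, fun a => ?_⟩
  have hfa : encode (f a) ∈ c.eval (encode a) := by simp [hc]
  obtain ⟨s, hs⟩ := Code.evaln_complete.1 hfa
  exact ⟨s, Option.bind_eq_some_iff.2 ⟨_, hs, encodek _⟩⟩

end BoundedEvaluation

section NestedBoxes

variable {G : Type*} [AddCommGroup G]

/-- The position at stage `s` after the levels below `e`, starting from `0`, have each added their
move, where `move s e x` is the move that level `e` wants to make at stage `s` from position `x`,
and `none` means to stay. -/
def corner (move : ℕ → ℕ → G → Option G) (s : ℕ) : ℕ → G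
  | 0 => 0
  | e + 1 => corner move s e + (move s e (corner move s e)).getD 0

theorem corner_succ_of_eq_none {move : ℕ → ℕ → G → Option G} {s e : ℕ}
    (h : move s e (corner move s e) = none) : corner move s (e + 1) = corner move s e := by
  simp [corner, h]

theorem corner_succ_of_eq_some {move : ℕ → ℕ → G → Option G} {s e : ℕ} {m : G}
    (h : move s e (corner move s e) = some m) :
    corner move s (e + 1) = corner move s e + m := by
  simp [corner, h]

theorem computable_corner_self [Primcodable G] (hadd : Computable₂ ((· + ·) : G → G → G))
    {move : ℕ → ℕ → G → Option G}
    (hmove : Computable fun p : ℕ × ℕ × G => move p.1 p.2.1 p.2.2) :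
    Computable fun s => corner move s s := by
  have hstep : Computable₂ fun (s : ℕ) (p : ℕ × G) => p.2 + (move s p.1 p.2).getD 0 :=
    hadd.comp (.comp .snd .snd) (Computable.option_getD hmove (.const 0))
  refine (Computable.nat_rec .id (.const 0) hstep).of_eq fun s => ?_
  suffices ∀ e, Nat.rec (0 : G) (fun e x => x + (move s e x).getD 0) e = corner move s e from
    this s
  intro e
  induction e with
  | zero => rfl
  | succ e ih => simp only [corner, ← ih]

theorem eventually_corner_succ_eq {move : ℕ → ℕ → G → Option G} {e : ℕ} {x m : G}
    (hx : ∀ᶠ s in atTop, corner move s e = x) (hm : ∀ᶠ s in atTop, move s e x = some m) :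
    ∀ᶠ s in atTop, corner move s (e + 1) = x + m := by
  filter_upwards [hx, hm] with s hx hm
  rw [corner_succ_of_eq_some (hx.symm ▸ hm), hx]

/-- The limit of the coordinate `π` of the positions `corner move s s`, for monotone moves the
supremum. -/
noncomputable def cornerLimit (move : ℕ → ℕ → G → Option G) (π : G → ℚ) : ℝ :=
  ⨆ s, (π (corner move s s) : ℝ)

variable [PartialOrder G]

/-- Moves which are never revoked and which lead from a box `[x, x + width e]` of level `e` to a
box `[y, y + width (e + 1)]` that lies inside it and beyond `[x, x + width (e + 1)]`, the box
obtained by staying. -/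
structure NestedMoves (width : ℕ → G) (move : ℕ → ℕ → G → Option G) : Prop where
  persistent {s t e : ℕ} {x m : G} : s ≤ t → move s e x = some m → move t e x = some m
  width_nonneg (e : ℕ) : 0 ≤ width e
  width_antitone : Antitone width
  width_succ_le {s e : ℕ} {x m : G} : move s e x = some m → width (e + 1) ≤ m
  add_width_succ_le {s e : ℕ} {x m : G} : move s e x = some m → m + width (e + 1) ≤ width e

namespace NestedMoves

variable {width : ℕ → G} {move : ℕ → ℕ → G → Option G}

theorem exists_eventually_corner_eq (h : NestedMoves width move) (e : ℕ) :
    ∃ x, ∀ᶠ s in atTop, corner move s e = x := by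
  induction e with
  | zero => exact ⟨0, .of_forall fun _ => rfl⟩
  | succ e ih =>
    obtain ⟨x, hx⟩ := ih
    by_cases hmove : ∃ s m, move s e x = some m
    · obtain ⟨s, m, hm⟩ := hmove
      exact ⟨x + m, eventually_corner_succ_eq hx <|
        eventually_atTop.2 ⟨s, fun t hst => h.persistent hst hm⟩⟩
    · push Not at hmove
      refine ⟨x, hx.mono fun s hs => ?_⟩
      rw [corner_succ_of_eq_none, hs]
      exact Option.eq_none_iff_forall_ne_some.2 (hs ▸ hmove s)

variable [IsOrderedAddMonoid G]

theorem corner_monotone (h : NestedMoves width move) (s : ℕ) : Monotone (corner move s) := by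
  refine monotone_nat_of_le_succ fun e => ?_
  cases hm : move s e (corner move s e) with
  | none => exact (corner_succ_of_eq_none hm).ge
  | some m =>
    rw [corner_succ_of_eq_some hm]
    exact le_add_of_nonneg_right ((h.width_nonneg _).trans (h.width_succ_le hm))

theorem corner_add_width_antitone (h : NestedMoves width move) (s : ℕ) :
    Antitone fun e => corner move s e + width e := by
  refine antitone_nat_of_succ_le fun e => ?_
  cases hm : move s e (corner move s e) with
  | none =>
    rw [corner_succ_of_eq_none hm]
    exact add_le_add_right (h.width_antitone e.le_succ) _
  | some m =>
    rw [corner_succ_of_eq_some hm, add_assoc]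
    exact add_le_add_right (h.add_width_succ_le hm) _

theorem corner_self_mem_Icc (h : NestedMoves width move) {e s : ℕ} (hes : e ≤ s) :
    corner move s s ∈ Set.Icc (corner move s e) (corner move s e + width e) :=
  ⟨h.corner_monotone s hes,
    (le_add_of_nonneg_right (h.width_nonneg s)).trans (h.corner_add_width_antitone s hes)⟩

theorem corner_eq_or_add_width_le (h : NestedMoves width move) {s t : ℕ} (hst : s ≤ t) (e : ℕ) :
    corner move s e = corner move t e ∨ corner move s e + width e ≤ corner move t e := by
  induction e with
  | zero => exact .inl rfl
  | succ e ih =>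
    rcases ih with heq | hle
    · cases hs : move s e (corner move s e) with
      | some m =>
        left
        rw [corner_succ_of_eq_some hs, corner_succ_of_eq_some (h.persistent hst (heq ▸ hs)), heq]
      | none =>
        rw [corner_succ_of_eq_none hs]
        cases ht : move t e (corner move t e) with
        | none => exact .inl (heq.trans (corner_succ_of_eq_none ht).symm)
        | some m =>
          right
          rw [corner_succ_of_eq_some ht, heq]
          exact add_le_add_right (h.width_succ_le ht) _
    · exact .inr <| (h.corner_add_width_antitone s e.le_succ).trans <|
        hle.trans (h.corner_monotone t e.le_succ)

theorem corner_self_monotone (h : NestedMoves width move) :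
    Monotone fun s => corner move s s := fun s t hst => by
  refine le_trans ?_ (h.corner_monotone t hst)
  rcases h.corner_eq_or_add_width_le hst s with heq | hle
  · exact heq.le
  · exact (le_add_of_nonneg_right (h.width_nonneg s)).trans hle

theorem corner_self_le (h : NestedMoves width move) (s : ℕ) : corner move s s ≤ width 0 :=
  (h.corner_self_mem_Icc s.zero_le).2.trans_eq (zero_add _)

variable {π : G → ℚ}

theorem tendsto_cornerLimit (h : NestedMoves width move) (hπ : Monotone π) :
    Tendsto (fun s => (π (corner move s s) : ℝ)) atTop (𝓝 (cornerLimit move π)) :=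
  tendsto_atTop_ciSup (fun _ _ hst => Rat.cast_le.2 <| hπ <| h.corner_self_monotone hst)
    ⟨π (width 0), Set.forall_mem_range.2 fun s => Rat.cast_le.2 <| hπ <| h.corner_self_le s⟩

theorem cornerLimit_mem_Icc (h : NestedMoves width move) (hπ : Monotone π) {e : ℕ} {x : G}
    (hx : ∀ᶠ s in atTop, corner move s e = x) :
    cornerLimit move π ∈ Set.Icc (π x : ℝ) (π (x + width e)) := by
  refine isClosed_Icc.mem_of_tendsto (h.tendsto_cornerLimit hπ) ?_
  filter_upwards [hx, eventually_ge_atTop e] with s hs hes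
  obtain ⟨hle, hge⟩ := hs ▸ h.corner_self_mem_Icc hes
  exact ⟨Rat.cast_le.2 (hπ hle), Rat.cast_le.2 (hπ hge)⟩

theorem leftCE_cornerLimit [Primcodable G] (h : NestedMoves width move)
    (hadd : Computable₂ ((· + ·) : G → G → G))
    (hmove : Computable fun p : ℕ × ℕ × G => move p.1 p.2.1 p.2.2)
    (hπ : Monotone π) (hπc : Computable π) : LeftCE (cornerLimit move π) :=
  ⟨_, hπc.comp (computable_corner_self hadd hmove), hπ.comp h.corner_self_monotone,
    h.tendsto_cornerLimit hπ⟩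

end NestedMoves

end NestedBoxes

section Diagonalization

/-- The side length of the box of level `e`. The factor `12 * (e + 1)` allows level `e` to defeat
all Solovay constants up to `e`. -/
def sideLength : ℕ → ℚ
  | 0 => 1
  | e + 1 => sideLength e / (12 * (e + 1) : ℕ)

theorem sideLength_eq_mul_succ (e : ℕ) :
    sideLength e = 12 * (e + 1) * sideLength (e + 1) := by
  rw [sideLength]
  push_cast
  field_simp

theorem sideLength_pos : ∀ e, 0 < sideLength e
  | 0 => one_pos
  | e + 1 => div_pos (sideLength_pos e) (by positivity)

theorem twelve_mul_sideLength_succ_le (e : ℕ) : 12 * sideLength (e + 1) ≤ sideLength e := by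
  rw [sideLength_eq_mul_succ e, mul_right_comm]
  exact le_mul_of_one_le_right (mul_pos (by norm_num) (sideLength_pos _)).le (by simp)

theorem computable_sideLength : Computable sideLength := by
  have hstep : Computable₂ fun (_ : ℕ) (p : ℕ × ℚ) => p.2 / (12 * (p.1 + 1) : ℕ) :=
    computable_rat_div_natCast.comp (.comp .snd .snd) <| Primrec.to_comp <|
      Primrec.nat_mul.comp (.const 12) (Primrec.succ.comp (.comp .fst .snd))
  refine (Computable.nat_rec .id (.const 1) hstep).of_eq fun e => ?_
  induction e with
  | zero => rfl
  | succ e ih => simp only [sideLength, id_eq, ← ih]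

/-- The rational at which level `e` tests its program from the position `x`. -/
def query (e : ℕ) (x : ℚ × ℚ) : ℚ := x.1 + x.2 + sideLength e / 2

/-- The move of level `e` at the position `x` if its program outputs `y` on `query e x`: if `y` is
small, a long move of the first coordinate puts `x.1` far above `y` and `x.1 + x.2` just above the
query, otherwise a long move of the second coordinate puts `x.1 + x.2` above the query while
keeping `x.1` below `y`. -/
def response (e : ℕ) (x : ℚ × ℚ) (y : ℚ) : ℚ × ℚ :=
  if y < x.1 + sideLength e / 4 then (sideLength e / 2, sideLength (e + 1))
  else (sideLength (e + 1), sideLength e / 2)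

/-- The move of level `e`, which diagonalizes against the program coded by `e.unpair.1` and the
Solovay constant `e.unpair.2`, and waits for that program to answer within `s` steps. -/
def diagonalMove (s e : ℕ) (x : ℚ × ℚ) : Option (ℚ × ℚ) :=
  (evalWithin ℚ s (Denumerable.ofNat Code e.unpair.1) (query e x)).map (response e x)

theorem computable_rat_prod_add : Computable₂ ((· + ·) : ℚ × ℚ → ℚ × ℚ → ℚ × ℚ) :=
  .pair (computable_rat_add.comp (.comp .fst .fst) (.comp .fst .snd))
    (computable_rat_add.comp (.comp .snd .fst) (.comp .snd .snd))

theorem computable_query : Computable₂ query :=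
  computable_rat_add.comp
    (computable_rat_add.comp (.comp .fst .snd) (.comp .snd .snd))
    (computable_rat_div_natCast.comp (computable_sideLength.comp .fst) (.const 2))

theorem computable_response {γ : Type*} [Primcodable γ] {e : γ → ℕ} {x : γ → ℚ × ℚ} {y : γ → ℚ}
    (he : Computable e) (hx : Computable x) (hy : Computable y) :
    Computable fun p => response (e p) (x p) (y p) := by
  have hside : Computable fun p => sideLength (e p) := computable_sideLength.comp he
  have hsucc : Computable fun p => sideLength (e p + 1) :=
    computable_sideLength.comp (Computable.succ.comp he)
  have hhalf := computable_rat_div_natCast.comp hside (.const 2)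
  have hthreshold : Computable fun p => (x p).1 + sideLength (e p) / (4 : ℕ) :=
    computable_rat_add.comp (Computable.fst.comp hx)
      (computable_rat_div_natCast.comp hside (.const 4))
  exact computable_ite (computablePred_comp computablePred_rat_lt (.pair hy hthreshold))
    (.pair hhalf hsucc) (.pair hsucc hhalf)

theorem computable_diagonalMove :
    Computable fun p : ℕ × ℕ × ℚ × ℚ => diagonalMove p.1 p.2.1 p.2.2 := by
  have hcode : Computable fun p : ℕ × ℕ × ℚ × ℚ => Denumerable.ofNat Code p.2.1.unpair.1 :=
    (Computable.ofNat Code).comp <| Computable.fst.comp <| Computable.unpair.comp <|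
      .comp .fst .snd
  have hquery : Computable fun p : ℕ × ℕ × ℚ × ℚ => query p.2.1 p.2.2 :=
    computable_query.comp (.comp .fst .snd) (.comp .snd .snd)
  exact .option_map (computable_evalWithin .fst hcode hquery) <| computable_response
    (.comp .fst <| .comp .snd .fst) (.comp .snd <| .comp .snd .fst) .snd

theorem sideLength_succ_le_response (e : ℕ) (x : ℚ × ℚ) (y : ℚ) :
    (sideLength (e + 1), sideLength (e + 1)) ≤ response e x y := by
  have := sideLength_pos (e + 1)
  have := twelve_mul_sideLength_succ_le e
  unfold response
  split_ifs <;> constructor <;> dsimp only <;> linarith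

theorem response_add_sideLength_succ_le (e : ℕ) (x : ℚ × ℚ) (y : ℚ) :
    response e x y + (sideLength (e + 1), sideLength (e + 1)) ≤ (sideLength e, sideLength e) := by
  have := sideLength_pos (e + 1)
  have := twelve_mul_sideLength_succ_le e
  unfold response
  split_ifs <;> constructor <;> simp only [Prod.mk_add_mk] <;> linarith

theorem nestedMoves_diagonalMove :
    NestedMoves (fun e => (sideLength e, sideLength e)) diagonalMove where
  persistent hst h := by
    obtain ⟨y, hy, rfl⟩ := Option.map_eq_some_iff.1 h
    exact Option.map_eq_some_iff.2 ⟨y, evalWithin_mono hst hy, rfl⟩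
  width_nonneg e := ⟨(sideLength_pos e).le, (sideLength_pos e).le⟩
  width_antitone := antitone_nat_of_succ_le fun e => by
    have := sideLength_pos (e + 1)
    have := twelve_mul_sideLength_succ_le e
    constructor <;> dsimp only <;> linarith
  width_succ_le h := by
    obtain ⟨y, -, rfl⟩ := Option.map_eq_some_iff.1 h
    exact sideLength_succ_le_response _ _ y
  add_width_succ_le h := by
    obtain ⟨y, -, rfl⟩ := Option.map_eq_some_iff.1 h
    exact response_add_sideLength_succ_le _ _ y

theorem exists_eventually_corner_succ_eq_response {f : ℚ → ℚ} (hf : Computable f) (N : ℕ) :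
    ∃ e ≥ N, ∃ x : ℚ × ℚ,
      ∀ᶠ s in atTop, corner diagonalMove s (e + 1) = x + response e x (f (query e x)) := by
  obtain ⟨c, hc⟩ := exists_code_evalWithin_eq hf
  let e := Nat.pair (encode c) N
  obtain ⟨x, hx⟩ := nestedMoves_diagonalMove.exists_eventually_corner_eq e
  obtain ⟨s, hs⟩ := hc (query e x)
  refine ⟨e, Nat.right_le_pair _ _, x, eventually_corner_succ_eq hx ?_⟩
  refine eventually_atTop.2 ⟨s, fun t hst => nestedMoves_diagonalMove.persistent hst ?_⟩
  simp [diagonalMove, e, hs]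

theorem exists_rat_refuting_solovay_bound {f : ℚ → ℚ} (hf : Computable f) (N : ℕ) :
    ∃ q : ℚ, (q : ℝ) < cornerLimit diagonalMove Prod.fst + cornerLimit diagonalMove Prod.snd ∧
      (cornerLimit diagonalMove Prod.fst ≤ f q ∨
        N * (cornerLimit diagonalMove Prod.fst + cornerLimit diagonalMove Prod.snd - q) ≤
          cornerLimit diagonalMove Prod.fst - f q) := by
  obtain ⟨e, he, x, hx⟩ := exists_eventually_corner_succ_eq_response hf N
  obtain ⟨hα, hα'⟩ := nestedMoves_diagonalMove.cornerLimit_mem_Icc monotone_fst hx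
  obtain ⟨hβ, hβ'⟩ := nestedMoves_diagonalMove.cornerLimit_mem_Icc monotone_snd hx
  generalize cornerLimit diagonalMove Prod.fst = α at *
  generalize cornerLimit diagonalMove Prod.snd = β at *
  have hT : (sideLength e : ℝ) = 12 * (e + 1) * sideLength (e + 1) := mod_cast
    sideLength_eq_mul_succ e
  have hT' : (12 * sideLength (e + 1) : ℝ) ≤ sideLength e := mod_cast
    twelve_mul_sideLength_succ_le e
  have hpos : (0 : ℝ) < sideLength (e + 1) := mod_cast sideLength_pos (e + 1)
  have hN : (N : ℝ) ≤ e := mod_cast he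
  have hq : ((query e x : ℚ) : ℝ) = x.1 + x.2 + sideLength e / 2 := by simp [query]
  refine ⟨query e x, ?_⟩
  unfold response at *
  split_ifs at * with hlow
  · have hlow' : (f (query e x) : ℝ) < x.1 + sideLength e / 4 := mod_cast hlow
    push_cast [Prod.fst_add, Prod.snd_add] at hα hα' hβ hβ'
    refine ⟨by linarith, .inr ?_⟩
    calc N * (α + β - query e x) ≤ (e + 1) * (3 * sideLength (e + 1)) :=
          mul_le_mul (by linarith) (by linarith) (by linarith) (by positivity)
      _ = sideLength e / 4 := by linarith
      _ ≤ α - f (query e x) := by linarith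
  · have hhigh : (x.1 + sideLength e / 4 : ℝ) ≤ f (query e x) := mod_cast not_lt.1 hlow
    push_cast [Prod.fst_add, Prod.snd_add] at hα hα' hβ hβ'
    exact ⟨by linarith, .inl (by linarith)⟩

end Diagonalization

theorem addition_not_upper_bound_totalSolovay :
    ∃ α β : ℝ, LeftCE α ∧ LeftCE β ∧ ¬ TotalSolovayReducible α (α + β) := by
  have hleft {π : ℚ × ℚ → ℚ} (hπ : Monotone π) (hπc : Computable π) :
      LeftCE (cornerLimit diagonalMove π) :=
    nestedMoves_diagonalMove.leftCE_cornerLimit computable_rat_prod_add computable_diagonalMove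
      hπ hπc
  refine ⟨cornerLimit diagonalMove Prod.fst, cornerLimit diagonalMove Prod.snd,
    hleft monotone_fst .fst, hleft monotone_snd .snd, ?_⟩
  rintro ⟨c, -, f, hf, hred⟩
  obtain ⟨N, hN⟩ := exists_nat_ge c
  obtain ⟨q, hq, hexceeds | hslow⟩ := exists_rat_refuting_solovay_bound hf N
  · exact (hred q hq).1.not_ge hexceeds
  · refine (hred q hq).2.not_ge (le_trans ?_ hslow)
    have hN' : (c : ℝ) ≤ N := mod_cast hN
    exact mul_le_mul_of_nonneg_right hN' (sub_nonneg.2 hq.le)
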